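/- arXiv:1901.11500 — 4 statements merged into one kernel-verified Lean document; each statement's English description precedes it below -/
import Mathlib

section
/- Let g : E → ℝ be λ-strongly convex (λ > 0) and L-smooth, i.e. g(y) ≥ g(x) + ⟪∇g(x), y − x⟫ + (λ/2)‖y − x‖² and g(y) ≤ g(x) + ⟪∇g(x), y − x⟫ + (L/2)‖y − x‖² for all x,y, and let x* ∈ K be the minimizer of g over K. Then for any step size 0 < η ≤ 1/L and any v ∈ K, the projected gradient step satisfies ‖Π(v − η ∇g(v)) − x*‖ ≤ √(1 − 2λη/(1 + ηλ)) · ‖v − x*‖. -/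
open RealInnerProductSpace

/-!
Let `p` be the projected step. The obtuse-angle criterion for the projection bounds
`‖p - y‖² + ‖p - v‖²` by `‖v - y‖² + 2η⟪∇g v, y - p⟫` for every `y ∈ K`. The quadratic bounds on `g`
at `v` give `2η⟪∇g v, y - p⟫ ≤ 2η(g y - g p) - ηλ‖v - y‖² + ηL‖p - v‖²`, whose last term is absorbed
on the left because `ηL ≤ 1`. At `y = x*`, the quadratic growth `g p - g x* ≥ (λ/2)‖p - x*‖²` yields
`(1 + ηλ)‖p - x*‖² ≤ (1 - ηλ)‖v - x*‖²`.
-/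

section

variable {E : Type*} [NormedAddCommGroup E] [InnerProductSpace ℝ E] {K : Set E}

-- `HasGradientWithinAt` is only available in complete spaces, hence `HasFDerivWithinAt` here.
lemma inner_sub_nonneg_of_isMinOn (hK : Convex ℝ K) {g : E → ℝ} {g' x y : E}
    (hg : HasFDerivWithinAt g (innerSL ℝ g') K x) (hx : x ∈ K) (hmin : IsMinOn g K x)
    (hy : y ∈ K) : 0 ≤ ⟪g', y - x⟫ :=
  hmin.localize.hasFDerivWithinAt_nonneg hg
    (sub_mem_posTangentConeAt_of_segment_subset (hK.segment_subset hx hy))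

lemma add_quadratic_le_of_isMinOn (hK : Convex ℝ K) {g : E → ℝ} {g' x y : E} {m : ℝ}
    (hg : HasFDerivWithinAt g (innerSL ℝ g') K x) (hx : x ∈ K) (hmin : IsMinOn g K x)
    (hy : y ∈ K) (hlower : g x + ⟪g', y - x⟫ + m / 2 * ‖y - x‖ ^ 2 ≤ g y) :
    g x + m / 2 * ‖y - x‖ ^ 2 ≤ g y := by
  linarith [inner_sub_nonneg_of_isMinOn hK hg hx hmin hy]

lemma inner_sub_sub_nonpos_of_isMinOn_norm_sub (hK : Convex ℝ K) {u p y : E} (hp : p ∈ K)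
    (hmin : IsMinOn (‖u - ·‖) K p) (hy : y ∈ K) : ⟪u - p, y - p⟫ ≤ 0 := by
  have hdist : ‖u - p‖ = ⨅ w : K, ‖u - w‖ := (hmin.iInf_eq hp).symm
  exact (norm_eq_iInf_iff_real_inner_le_zero hK hp).1 hdist y hy

lemma norm_sq_add_norm_sq_le_of_isMinOn_norm_sub (hK : Convex ℝ K) {v d p y : E} (hp : p ∈ K)
    (hmin : IsMinOn (‖v - d - ·‖) K p) (hy : y ∈ K) :
    ‖p - y‖ ^ 2 + ‖p - v‖ ^ 2 ≤ ‖v - y‖ ^ 2 + 2 * ⟪d, y - p⟫ := by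
  have hobtuse : ⟪v - p, y - p⟫ - ⟪d, y - p⟫ ≤ 0 := by
    rw [← inner_sub_left, sub_right_comm]
    exact inner_sub_sub_nonpos_of_isMinOn_norm_sub hK hp hmin hy
  have hcosine : ‖v - y‖ ^ 2 = ‖p - v‖ ^ 2 - 2 * ⟪v - p, y - p⟫ + ‖p - y‖ ^ 2 := by
    rw [norm_sub_rev p v, norm_sub_rev p y, ← norm_sub_sq_real, sub_sub_sub_cancel_right]
  linarith

lemma norm_sq_le_of_projected_gradient_step (hK : Convex ℝ K) {g : E → ℝ} {g' v p y : E}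
    {m L η : ℝ} (hη : 0 ≤ η) (hηL : η * L ≤ 1)
    (hp : p ∈ K) (hmin : IsMinOn (‖v - η • g' - ·‖) K p) (hy : y ∈ K)
    (hlower : g v + ⟪g', y - v⟫ + m / 2 * ‖y - v‖ ^ 2 ≤ g y)
    (hupper : g p ≤ g v + ⟪g', p - v⟫ + L / 2 * ‖p - v‖ ^ 2) :
    ‖p - y‖ ^ 2 ≤ (1 - η * m) * ‖v - y‖ ^ 2 + 2 * η * (g y - g p) := by
  have hinner : ⟪g', y - p⟫ ≤
      g y - g p - m / 2 * ‖v - y‖ ^ 2 + L / 2 * ‖p - v‖ ^ 2 := by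
    rw [← sub_sub_sub_cancel_right y p v, inner_sub_right, norm_sub_rev v y]
    linarith
  have hscaled := mul_le_mul_of_nonneg_left hinner hη
  have habsorb : η * L * ‖p - v‖ ^ 2 ≤ ‖p - v‖ ^ 2 :=
    mul_le_of_le_one_left (sq_nonneg _) hηL
  have hproj := norm_sq_add_norm_sq_le_of_isMinOn_norm_sub hK hp hmin hy
  rw [real_inner_smul_left] at hproj
  linarith

theorem projected_gradient_step_contraction_general (hK : Convex ℝ K) {g : E → ℝ}
    {gradg : E → E} (hgrad : ∀ x, HasFDerivAt g (innerSL ℝ (gradg x)) x) {lam L : ℝ}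
    (hlower : ∀ x y, g x + ⟪gradg x, y - x⟫ + lam / 2 * ‖y - x‖ ^ 2 ≤ g y)
    (hupper : ∀ x y, g y ≤ g x + ⟪gradg x, y - x⟫ + L / 2 * ‖y - x‖ ^ 2)
    {xstar : E} (hxstar : xstar ∈ K) (hxstarMin : IsMinOn g K xstar)
    {η : ℝ} (hη : 0 ≤ η) (hηL : η * L ≤ 1) (hηlam : 0 < 1 + η * lam)
    {v p : E} (hp : p ∈ K) (hpMin : IsMinOn (‖v - η • gradg v - ·‖) K p) :
    ‖p - xstar‖ ≤ √(1 - 2 * lam * η / (1 + η * lam)) * ‖v - xstar‖ := by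
  have hstep := norm_sq_le_of_projected_gradient_step hK hη hηL hp hpMin hxstar
    (hlower v xstar) (hupper v p)
  have hgrowth := mul_le_mul_of_nonneg_left (add_quadratic_le_of_isMinOn hK
    (hgrad xstar).hasFDerivWithinAt hxstar hxstarMin hp (hlower xstar p)) hη
  have hfactor : 1 - 2 * lam * η / (1 + η * lam) = (1 - η * lam) / (1 + η * lam) := by
    rw [eq_div_iff hηlam.ne', sub_mul, div_mul_cancel₀ _ hηlam.ne']
    ring
  have hsq : ‖p - xstar‖ ^ 2 ≤
      (1 - 2 * lam * η / (1 + η * lam)) * ‖v - xstar‖ ^ 2 := by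
    rw [hfactor, div_mul_eq_mul_div, le_div_iff₀ hηlam]
    linarith
  simpa only [Real.sqrt_mul' _ (sq_nonneg ‖v - xstar‖), Real.sqrt_sq (norm_nonneg _)] using
    Real.le_sqrt_of_sq_le hsq

end

/-- contraction of the projected gradient step for a `λ`-strongly convex,
`L`-smooth function (Lemma 1 / Lemma `GradCont`). -/
theorem projected_gradient_step_contraction
    {E : Type*} [NormedAddCommGroup E] [InnerProductSpace ℝ E] [CompleteSpace E]
    (K : Set E) (hKne : K.Nonempty) (hKcl : IsClosed K) (hKconv : Convex ℝ K)
    (proj : E → E) (hprojMem : ∀ u, proj u ∈ K)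
    (hproj : ∀ u, ∀ y ∈ K, ‖u - proj u‖ ≤ ‖u - y‖)
    (g : E → ℝ) (gradg : E → E)
    (hgrad : ∀ x, HasGradientAt g (gradg x) x)
    (lam L : ℝ) (hlam : 0 < lam)
    (hStrong : ∀ x y : E, g y ≥ g x + ⟪gradg x, y - x⟫ + lam / 2 * ‖y - x‖ ^ 2)
    (hSmooth : ∀ x y : E, g y ≤ g x + ⟪gradg x, y - x⟫ + L / 2 * ‖y - x‖ ^ 2)
    (xstar : E) (hxstarMem : xstar ∈ K) (hxstarMin : ∀ y ∈ K, g xstar ≤ g y)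
    (η : ℝ) (hη : 0 < η) (hηL : η ≤ 1 / L)
    (v : E) (hv : v ∈ K) :
    ‖proj (v - η • gradg v) - xstar‖ ≤
      Real.sqrt (1 - 2 * lam * η / (1 + η * lam)) * ‖v - xstar‖ := by
  have hL : 0 < L := one_div_pos.1 (hη.trans_le hηL)
  exact projected_gradient_step_contraction_general hKconv (fun x ↦ (hgrad x).hasFDerivAt)
    hStrong hSmooth hxstarMem hxstarMin hη.le ((le_div_iff₀ hL).1 hηL) (by positivity)
    (hprojMem _) (hproj _)
end

section
/- Under assumptions (A2)–(A4), let 0 < η ≤ 1/L, let θ, θ̂ ∈ Θ, let x* ∈ K be the minimizer of f(·,θ) over K, let x ∈ K, and define the k-step predicted projected gradient iterates by z⁰ = x and z^{j+1} = Π(z^j − η ∇_x f(z^j, θ̂)) for j ≥ 0. Then for every integer k ≥ 1, ‖z^k − x*‖ ≤ C_{η,λ}^k ‖x − x*‖ + (η C_θ (1 − C_{η,λ}^k)/(1 − C_{η,λ})) ‖θ − θ̂‖; in particular ‖z^k − x*‖ ≤ C_{η,λ}^k ‖x − x*‖ + (η C_θ/(1 − C_{η,λ})) ‖θ − θ̂‖.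 -/
/-!
For a projected gradient step `w = P (y - η ∇F(y))`, add the variational inequality of the
projection at `x*` to the two strong convexity bounds at `(y, x*)` and `(x*, w)`, the smoothness
bound at `(y, w)` and the first-order optimality of `x*`. Since `η L ≤ 1`, the terms in `‖w - y‖²`
are absorbed and `(1 + η λ) ‖w - x*‖² ≤ (1 - η λ) ‖y - x*‖²` remains: the step towards the
minimizer contracts by `C_{η,λ}`. A gradient error `δ`, here `C_θ ‖θ - θ̂‖`, moves the step by at
most `η δ`, because `P` is nonexpansive, and the recursion `e (j + 1) ≤ C e j + η δ` sums
geometrically.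
-/

open RealInnerProductSpace

/-- The contraction constant `C_{η,λ} = √(1 - 2λη/(1+ηλ))`. -/
noncomputable def contractionConst (η lam : ℝ) : ℝ :=
  Real.sqrt (1 - 2 * lam * η / (1 + η * lam))

/-- `P` is a metric projection onto `K`: it sends every point to a nearest point of `K`. -/
structure IsMetricProjection {E : Type*} [NormedAddCommGroup E] (K : Set E) (P : E → E) : Prop where
  mem : ∀ u, P u ∈ K
  norm_sub_le_norm_sub : ∀ u, ∀ y ∈ K, ‖u - P u‖ ≤ ‖u - y‖

/-- `F` is `lam`-strongly convex and `L`-smooth on `K` with gradient field `g`, expressed by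
quadratic lower and upper bounds. The gradient is encoded through `innerSL`, since `HasGradientAt`
would require `E` to be complete. -/
structure IsStronglyConvexSmoothOn {E : Type*} [NormedAddCommGroup E] [InnerProductSpace ℝ E]
    (K : Set E) (F : E → ℝ) (g : E → E) (lam L : ℝ) : Prop where
  hasFDerivWithinAt : ∀ x ∈ K, HasFDerivWithinAt F (innerSL ℝ (g x)) K x
  lower_bound : ∀ x ∈ K, ∀ y ∈ K, F x + ⟪g x, y - x⟫ + lam / 2 * ‖y - x‖ ^ 2 ≤ F y
  upper_bound : ∀ x ∈ K, ∀ y ∈ K, F y ≤ F x + ⟪g x, y - x⟫ + L / 2 * ‖y - x‖ ^ 2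

section ContractionConst

variable {η lam : ℝ}

lemma contractionConst_nonneg (η lam : ℝ) : 0 ≤ contractionConst η lam :=
  Real.sqrt_nonneg _

lemma contractionConst_lt_one (hη : 0 < η) (hlam : 0 < lam) : contractionConst η lam < 1 := by
  rw [contractionConst, Real.sqrt_lt' one_pos, one_pow, sub_lt_self_iff]
  positivity

lemma le_contractionConst_mul_of_mul_sq_le {a b : ℝ} (h : 0 < 1 + η * lam) (hb : 0 ≤ b)
    (hab : (1 + η * lam) * a ^ 2 ≤ (1 - η * lam) * b ^ 2) : a ≤ contractionConst η lam * b := by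
  have hconst : 1 - 2 * lam * η / (1 + η * lam) = (1 - η * lam) / (1 + η * lam) := by
    rw [eq_div_iff h.ne', sub_mul, div_mul_cancel₀ _ h.ne']
    ring
  rw [contractionConst, hconst, ← Real.sqrt_sq hb, ← Real.sqrt_mul' _ (sq_nonneg b)]
  apply Real.le_sqrt_of_sq_le
  rwa [div_mul_eq_mul_div, le_div_iff₀ h, mul_comm]

end ContractionConst

lemma le_pow_mul_add_mul_geom_sum {R : Type*} [CommSemiring R] [PartialOrder R] [IsOrderedRing R]
    {u : ℕ → R} {c b : R} (hc : 0 ≤ c) (hu : ∀ n, u (n + 1) ≤ c * u n + b) (n : ℕ) :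
    u n ≤ c ^ n * u 0 + b * ∑ i ∈ Finset.range n, c ^ i := by
  have h := discrete_gronwall_prod_general (n₀ := 0) (fun n _ => hu n) (fun _ _ => hc) n.zero_le
  simpa only [Finset.prod_const, Nat.card_Ico, Nat.Ico_zero_eq_range, Finset.card_range,
    ← Finset.mul_sum, mul_comm (u 0), add_comm _ 1, ← Nat.sub_sub,
    Finset.sum_range_reflect (fun i => c ^ i) n] using h

section Projection

variable {E : Type*} [NormedAddCommGroup E] [InnerProductSpace ℝ E] {K : Set E} {P : E → E}

namespace IsMetricProjection

lemma inner_sub_le_zero (hP : IsMetricProjection K P) (hK : Convex ℝ K) (u : E) {y : E}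
    (hy : y ∈ K) : ⟪u - P u, y - P u⟫ ≤ 0 := by
  have : Nonempty K := ⟨⟨y, hy⟩⟩
  have hmin : ‖u - P u‖ = ⨅ w : K, ‖u - w‖ :=
    le_antisymm (le_ciInf fun w => hP.norm_sub_le_norm_sub u w w.2)
      (ciInf_le ⟨0, Set.forall_mem_range.2 fun _ => norm_nonneg _⟩ (⟨P u, hP.mem u⟩ : K))
  exact (norm_eq_iInf_iff_real_inner_le_zero hK (hP.mem u)).1 hmin y hy

lemma norm_map_sub_map_le (hP : IsMetricProjection K P) (hK : Convex ℝ K) (u v : E) :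
    ‖P u - P v‖ ≤ ‖u - v‖ := by
  have hu := hP.inner_sub_le_zero hK u (hP.mem v)
  have hv := hP.inner_sub_le_zero hK v (hP.mem u)
  have hfirm : ‖P u - P v‖ ^ 2 ≤ ⟪u - v, P u - P v⟫ := by
    rw [← real_inner_self_eq_norm_sq]
    simp only [inner_sub_left, inner_sub_right] at hu hv ⊢
    linarith
  have hmul : ‖P u - P v‖ * ‖P u - P v‖ ≤ ‖u - v‖ * ‖P u - P v‖ := by
    rw [← sq]
    exact hfirm.trans (real_inner_le_norm _ _)
  rcases (norm_nonneg (P u - P v)).eq_or_lt with hzero | hpos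
  · exact hzero ▸ norm_nonneg _
  · exact le_of_mul_le_mul_right hmul hpos

lemma inner_map_sub_sub_le_inner (hP : IsMetricProjection K P) (hK : Convex ℝ K) (y d : E) {a : E}
    (ha : a ∈ K) : ⟪d, P (y - d) - a⟫ ≤ ⟪y - P (y - d), P (y - d) - a⟫ := by
  have h := hP.inner_sub_le_zero hK (y - d) ha
  simp only [inner_sub_left, inner_sub_right] at h ⊢
  linarith

end IsMetricProjection

lemma inner_nonneg_of_isMinOn {F : E → ℝ} {g a w : E} (hmin : IsMinOn F K a)
    (hK : Convex ℝ K) (hF : HasFDerivWithinAt F (innerSL ℝ g) K a) (ha : a ∈ K)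
    (hw : w ∈ K) : 0 ≤ ⟪g, w - a⟫ :=
  hmin.localize.hasFDerivWithinAt_nonneg hF
    (sub_mem_posTangentConeAt_of_segment_subset (hK.segment_subset ha hw))

end Projection

namespace IsStronglyConvexSmoothOn

variable {E : Type*} [NormedAddCommGroup E] [InnerProductSpace ℝ E] {K : Set E} {P : E → E}
  {F : E → ℝ} {g : E → E} {lam L η : ℝ} {a y w : E}

lemma mul_sq_add_sq_le_inner_add (hF : IsStronglyConvexSmoothOn K F g lam L) (hK : Convex ℝ K)
    (ha : a ∈ K) (hmin : IsMinOn F K a) (hy : y ∈ K) (hw : w ∈ K) :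
    lam / 2 * (‖w - a‖ ^ 2 + ‖y - a‖ ^ 2) ≤ ⟪g y, w - a⟫ + L / 2 * ‖y - w‖ ^ 2 := by
  have hopt := inner_nonneg_of_isMinOn hmin hK (hF.hasFDerivWithinAt a ha) ha hw
  have hya := hF.lower_bound y hy a ha
  have haw := hF.lower_bound a ha w hw
  have hyw := hF.upper_bound y hy w hw
  have hsplit : ⟪g y, w - y⟫ - ⟪g y, a - y⟫ = ⟪g y, w - a⟫ := by
    rw [← inner_sub_right, sub_sub_sub_cancel_right]
  rw [norm_sub_rev a y] at hya
  rw [norm_sub_rev w y] at hyw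
  linarith

lemma mul_norm_projected_step_sub_sq_le (hF : IsStronglyConvexSmoothOn K F g lam L)
    (hK : Convex ℝ K) (hP : IsMetricProjection K P) (hη : 0 ≤ η) (hηL : η * L ≤ 1)
    (ha : a ∈ K) (hmin : IsMinOn F K a) (hy : y ∈ K) :
    (1 + η * lam) * ‖P (y - η • g y) - a‖ ^ 2 ≤ (1 - η * lam) * ‖y - a‖ ^ 2 := by
  have hproj := hP.inner_map_sub_sub_le_inner hK y (η • g y) ha
  have hw := hP.mem (y - η • g y)
  set w := P (y - η • g y)
  rw [real_inner_smul_left] at hproj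
  have hgrad := mul_le_mul_of_nonneg_left (hF.mul_sq_add_sq_le_inner_add hK ha hmin hy hw) hη
  have hexpand : ‖y - a‖ ^ 2 = ‖y - w‖ ^ 2 + 2 * ⟪y - w, w - a⟫ + ‖w - a‖ ^ 2 := by
    rw [← norm_add_sq_real, sub_add_sub_cancel]
  calc (1 + η * lam) * ‖w - a‖ ^ 2
      = ‖y - a‖ ^ 2 - ‖y - w‖ ^ 2 - 2 * ⟪y - w, w - a⟫ + η * lam * ‖w - a‖ ^ 2 := by
        rw [hexpand]; ring
    _ ≤ ‖y - a‖ ^ 2 - ‖y - w‖ ^ 2 - 2 * (η * ⟪g y, w - a⟫) + η * lam * ‖w - a‖ ^ 2 := by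
        gcongr
    _ ≤ (1 - η * lam) * ‖y - a‖ ^ 2 - (1 - η * L) * ‖y - w‖ ^ 2 := by linarith
    _ ≤ (1 - η * lam) * ‖y - a‖ ^ 2 :=
        sub_le_self _ (mul_nonneg (sub_nonneg.2 hηL) (sq_nonneg _))

lemma norm_projected_step_sub_le (hF : IsStronglyConvexSmoothOn K F g lam L) (hK : Convex ℝ K)
    (hP : IsMetricProjection K P) (hη : 0 ≤ η) (hηL : η * L ≤ 1) (hηlam : 0 < 1 + η * lam)
    (ha : a ∈ K) (hmin : IsMinOn F K a) (hy : y ∈ K) :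
    ‖P (y - η • g y) - a‖ ≤ contractionConst η lam * ‖y - a‖ :=
  le_contractionConst_mul_of_mul_sq_le hηlam (norm_nonneg _)
    (hF.mul_norm_projected_step_sub_sq_le hK hP hη hηL ha hmin hy)

lemma norm_inexact_projected_step_sub_le (hF : IsStronglyConvexSmoothOn K F g lam L)
    (hK : Convex ℝ K) (hP : IsMetricProjection K P) (hη : 0 ≤ η) (hηL : η * L ≤ 1)
    (hηlam : 0 < 1 + η * lam) (ha : a ∈ K) (hmin : IsMinOn F K a) (hy : y ∈ K) {v : E} {δ : ℝ}
    (hv : ‖g y - v‖ ≤ δ) :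
    ‖P (y - η • v) - a‖ ≤ contractionConst η lam * ‖y - a‖ + η * δ := by
  have herr : ‖P (y - η • v) - P (y - η • g y)‖ ≤ η * δ :=
    calc ‖P (y - η • v) - P (y - η • g y)‖
        ≤ ‖(y - η • v) - (y - η • g y)‖ := hP.norm_map_sub_map_le hK _ _
      _ = η * ‖g y - v‖ := by
          rw [sub_sub_sub_cancel_left, ← smul_sub, norm_smul, Real.norm_of_nonneg hη]
      _ ≤ η * δ := by gcongr
  calc ‖P (y - η • v) - a‖
      ≤ ‖P (y - η • v) - P (y - η • g y)‖ + ‖P (y - η • g y) - a‖ :=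
        norm_sub_le_norm_sub_add_norm_sub _ _ _
    _ ≤ contractionConst η lam * ‖y - a‖ + η * δ := by
        rw [add_comm]
        exact add_le_add (hF.norm_projected_step_sub_le hK hP hη hηL hηlam ha hmin hy) herr

end IsStronglyConvexSmoothOn

theorem predicted_gradient_multi_step_approx_contraction_general
    {E : Type*} [NormedAddCommGroup E] [InnerProductSpace ℝ E] {K : Set E} (hK : Convex ℝ K)
    {P : E → E} (hP : IsMetricProjection K P) {F : E → ℝ} {g ghat : E → E} {lam L η δ : ℝ}
    (hF : IsStronglyConvexSmoothOn K F g lam L) (hghat : ∀ x ∈ K, ‖g x - ghat x‖ ≤ δ)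
    (hlam : 0 < lam) (hη : 0 < η) (hηL : η * L ≤ 1) {a : E} (ha : a ∈ K) (hmin : IsMinOn F K a)
    {z : ℕ → E} (hz0 : z 0 ∈ K) (hz : ∀ j, z (j + 1) = P (z j - η • ghat (z j))) (k : ℕ) :
    ‖z k - a‖ ≤ contractionConst η lam ^ k * ‖z 0 - a‖
        + η * δ * ((1 - contractionConst η lam ^ k) / (1 - contractionConst η lam))
    ∧ ‖z k - a‖ ≤ contractionConst η lam ^ k * ‖z 0 - a‖
        + η * δ / (1 - contractionConst η lam) := by
  have hC0 := contractionConst_nonneg η lam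
  have hC1 := contractionConst_lt_one hη hlam
  have hδ : 0 ≤ δ := (norm_nonneg _).trans (hghat (z 0) hz0)
  have hzK : ∀ j, z j ∈ K
    | 0 => hz0
    | j + 1 => hz j ▸ hP.mem _
  have hstep (j : ℕ) : ‖z (j + 1) - a‖ ≤ contractionConst η lam * ‖z j - a‖ + η * δ := by
    rw [hz]
    exact hF.norm_inexact_projected_step_sub_le hK hP hη.le hηL (by positivity) ha hmin (hzK j)
      (hghat _ (hzK j))
  have hbound := le_pow_mul_add_mul_geom_sum (u := fun j => ‖z j - a‖) hC0 hstep k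
  rw [geom_sum_eq hC1.ne, ← neg_div_neg_eq, neg_sub, neg_sub] at hbound
  have hfrac : (1 - contractionConst η lam ^ k) / (1 - contractionConst η lam)
      ≤ 1 / (1 - contractionConst η lam) :=
    div_le_div_of_nonneg_right (sub_le_self _ (pow_nonneg hC0 k)) (sub_nonneg.2 hC1.le)
  refine ⟨hbound, hbound.trans ?_⟩
  rw [div_eq_mul_one_div (η * δ)]
  gcongr

/-- `k` projected gradient steps with the predicted parameter form an
approximate contraction with geometric rate, with error controlled by the parameter
prediction error. -/
theorem predicted_gradient_multi_step_approx_contraction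
    {E : Type*} [NormedAddCommGroup E] [InnerProductSpace ℝ E] [CompleteSpace E]
    {m : ℕ} (Θ : Set (EuclideanSpace ℝ (Fin m)))
    (K : Set E) (hKne : K.Nonempty) (hKcl : IsClosed K) (hKconv : Convex ℝ K)
    (proj : E → E) (hprojMem : ∀ u, proj u ∈ K)
    (hproj : ∀ u, ∀ y ∈ K, ‖u - proj u‖ ≤ ‖u - y‖)
    (f : E → EuclideanSpace ℝ (Fin m) → ℝ)
    (gradf : E → EuclideanSpace ℝ (Fin m) → E)
    (hgrad : ∀ x θ, HasGradientAt (fun y => f y θ) (gradf x θ) x)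
    (L lam Cθ : ℝ) (hlam : 0 < lam)
    -- (A2) L-smooth in x
    (hA2 : ∀ θ ∈ Θ, ∀ x y : E,
      f y θ ≤ f x θ + ⟪gradf x θ, y - x⟫ + L / 2 * ‖y - x‖ ^ 2)
    -- (A3) λ-strongly convex in x
    (hA3 : ∀ θ ∈ Θ, ∀ x y : E,
      f y θ ≥ f x θ + ⟪gradf x θ, y - x⟫ + lam / 2 * ‖y - x‖ ^ 2)
    -- (A4) Lipschitz x-gradients in θ
    (hA4 : ∀ x ∈ K, ∀ θ₁ ∈ Θ, ∀ θ₂ ∈ Θ,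
      ‖gradf x θ₁ - gradf x θ₂‖ ≤ Cθ * ‖θ₁ - θ₂‖)
    (η : ℝ) (hη : 0 < η) (hηL : η ≤ 1 / L)
    (θ θhat : EuclideanSpace ℝ (Fin m)) (hθ : θ ∈ Θ) (hθhat : θhat ∈ Θ)
    (xstar : E) (hxstarMem : xstar ∈ K)
    (hxstarMin : ∀ y ∈ K, f xstar θ ≤ f y θ)
    (x : E) (hx : x ∈ K)
    (z : ℕ → E) (hz0 : z 0 = x)
    (hzrec : ∀ j : ℕ, z (j + 1) = proj (z j - η • gradf (z j) θhat)) :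
    ∀ k : ℕ, 1 ≤ k →
      ‖z k - xstar‖ ≤ contractionConst η lam ^ k * ‖x - xstar‖
          + η * Cθ * (1 - contractionConst η lam ^ k) / (1 - contractionConst η lam)
            * ‖θ - θhat‖
      ∧ ‖z k - xstar‖ ≤ contractionConst η lam ^ k * ‖x - xstar‖
          + η * Cθ / (1 - contractionConst η lam) * ‖θ - θhat‖ := by
  intro k _
  have hηL' : η * L ≤ 1 := (le_div_iff₀ (one_div_pos.1 (hη.trans_le hηL))).1 hηL
  have hF : IsStronglyConvexSmoothOn K (f · θ) (gradf · θ) lam L :=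
    ⟨fun x _ => (hgrad x θ).hasFDerivAt.hasFDerivWithinAt, fun x _ y _ => hA3 θ hθ x y,
      fun x _ y _ => hA2 θ hθ x y⟩
  have h := predicted_gradient_multi_step_approx_contraction_general hKconv ⟨hprojMem, hproj⟩ hF
    (fun x hx => hA4 x hx θ hθ θhat hθhat) hlam hη hηL' hxstarMem hxstarMin (hz0 ▸ hx) hzrec k
  rw [hz0] at h
  convert h using 3 <;> ring
end

section
/- Let E be a real inner product space, K ⊆ E a convex set, and let g : E → ℝ be convex on K with a ≤ g(x) ≤ a + D for all x ∈ K (for some a ∈ ℝ and D ≥ 0). Let N ≥ 1, let x_1, …, x_N ∈ K, let p_1, …, p_N ≥ 0 with Σ_{i=1}^{N} p_i = 1, and let γ > 0. Then ln( Σ_{i=1}^{N} p_i · exp(−γ g(x_i)) ) ≤ −γ · g( Σ_{i=1}^{N} p_i x_i ) + γ² D² / 8. -/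
/-!
The left-hand side is the cumulant generating function at `-γ` of the random variable taking the
value `g (x i)` with probability `p i`. Hoeffding's lemma bounds it by `-γ` times the mean plus
`γ ^ 2 * D ^ 2 / 8`, and Jensen's inequality bounds the mean from below by `g (∑ i, p i • x i)`.
-/

open Finset

section CumulantGeneratingFunction

open MeasureTheory ProbabilityTheory

variable {Ω : Type*} [MeasurableSpace Ω] {μ : Measure Ω} {X : Ω → ℝ}

lemma cgf_const_add [NeZero μ] {t : ℝ} (hX : Integrable (fun ω ↦ Real.exp (t * X ω)) μ) (c : ℝ) :
    cgf (fun ω ↦ c + X ω) μ t = t * c + cgf X μ t := by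
  rw [cgf, mgf_const_add, Real.log_mul (Real.exp_ne_zero _) (mgf_pos_iff.mpr hX).ne',
    Real.log_exp, cgf]

lemma cgf_le_of_mem_Icc [IsProbabilityMeasure μ] {a b : ℝ} (hX : AEMeasurable X μ)
    (hab : ∀ᵐ ω ∂μ, X ω ∈ Set.Icc a b) (t : ℝ) :
    cgf X μ t ≤ t * μ[X] + t ^ 2 * (b - a) ^ 2 / 8 := by
  have hcentered : cgf (fun ω ↦ X ω - μ[X]) μ t ≤ t ^ 2 * (b - a) ^ 2 / 8 := by
    refine ((hasSubgaussianMGF_of_mem_Icc hX hab).cgf_le t).trans_eq ?_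
    simp only [NNReal.coe_pow, NNReal.coe_div, coe_nnnorm, NNReal.coe_ofNat, div_pow,
      Real.norm_eq_abs, sq_abs]
    ring
  have hshift : cgf (fun ω ↦ X ω - μ[X]) μ t = t * -μ[X] + cgf X μ t := by
    simpa only [neg_add_eq_sub] using cgf_const_add (integrable_exp_mul_of_mem_Icc hX hab) (-μ[X])
  linarith

end CumulantGeneratingFunction

section FiniteWeights

variable {ι : Type*} {s : Finset ι} {w : ι → ℝ} {a b : ℝ}

/-- The probability distribution on the finite set `s` with masses `w`, used to read convex
combinations as expectations. It lives on the subtype `s`, so `w` is unconstrained elsewhere. -/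
noncomputable def weightPMF (hw : ∀ i ∈ s, 0 ≤ w i) (hw_sum : ∑ i ∈ s, w i = 1) : PMF s :=
  PMF.ofFintype (fun i ↦ ENNReal.ofReal (w i)) <| by
    rw [sum_coe_sort s (fun i ↦ ENNReal.ofReal (w i)), ← ENNReal.ofReal_sum_of_nonneg hw, hw_sum,
      ENNReal.ofReal_one]

lemma integral_weightPMF [MeasurableSpace s] [MeasurableSingletonClass s]
    {F : Type*} [NormedAddCommGroup F] [NormedSpace ℝ F] [CompleteSpace F]
    (hw : ∀ i ∈ s, 0 ≤ w i) (hw_sum : ∑ i ∈ s, w i = 1) (f : ι → F) :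
    ∫ i, f i ∂(weightPMF hw hw_sum).toMeasure = ∑ i ∈ s, w i • f i := by
  rw [PMF.integral_eq_sum, ← sum_coe_sort s (fun i ↦ w i • f i)]
  refine sum_congr rfl fun i _ ↦ ?_
  rw [weightPMF, PMF.ofFintype_apply, ENNReal.toReal_ofReal (hw i i.2)]

lemma log_sum_mul_exp_le_of_mem_Icc {y : ι → ℝ} (hw : ∀ i ∈ s, 0 ≤ w i)
    (hw_sum : ∑ i ∈ s, w i = 1) (hy : ∀ i ∈ s, y i ∈ Set.Icc a b) (t : ℝ) :
    Real.log (∑ i ∈ s, w i * Real.exp (t * y i)) ≤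
      t * ∑ i ∈ s, w i * y i + t ^ 2 * (b - a) ^ 2 / 8 := by
  let _ : MeasurableSpace s := ⊤
  have hoeffding := cgf_le_of_mem_Icc (μ := (weightPMF hw hw_sum).toMeasure)
    (X := fun i : s ↦ y i) (measurable_of_finite _).aemeasurable (.of_forall fun i ↦ hy i i.2) t
  simpa only [ProbabilityTheory.cgf, ProbabilityTheory.mgf, smul_eq_mul,
    integral_weightPMF hw hw_sum y,
    integral_weightPMF hw hw_sum (fun i ↦ Real.exp (t * y i))] using hoeffding

theorem log_exp_weighted_average_bound_general {E : Type*} [AddCommGroup E] [Module ℝ E]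
    {K : Set E} {g : E → ℝ} (hg : ConvexOn ℝ K g) {x : ι → E} (hx : ∀ i ∈ s, x i ∈ K)
    (hgx : ∀ i ∈ s, g (x i) ∈ Set.Icc a b) (hw : ∀ i ∈ s, 0 ≤ w i) (hw_sum : ∑ i ∈ s, w i = 1)
    {γ : ℝ} (hγ : 0 ≤ γ) :
    Real.log (∑ i ∈ s, w i * Real.exp (-γ * g (x i))) ≤
      -γ * g (∑ i ∈ s, w i • x i) + γ ^ 2 * (b - a) ^ 2 / 8 := by
  have jensen : g (∑ i ∈ s, w i • x i) ≤ ∑ i ∈ s, w i * g (x i) := hg.map_sum_le hw hw_sum hx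
  calc Real.log (∑ i ∈ s, w i * Real.exp (-γ * g (x i)))
      ≤ -γ * ∑ i ∈ s, w i * g (x i) + (-γ) ^ 2 * (b - a) ^ 2 / 8 :=
        log_sum_mul_exp_le_of_mem_Icc hw hw_sum hgx (-γ)
    _ ≤ -γ * g (∑ i ∈ s, w i • x i) + γ ^ 2 * (b - a) ^ 2 / 8 := by
        rw [neg_sq]
        gcongr ?_ + _
        exact mul_le_mul_of_nonpos_left jensen (neg_nonpos.mpr hγ)

end FiniteWeights

/-- Hoeffding's lemma combined with Jensen's inequality for the
exponentially weighted average step. -/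
theorem log_exp_weighted_average_bound
    {E : Type*} [NormedAddCommGroup E] [InnerProductSpace ℝ E]
    (K : Set E) (hKconv : Convex ℝ K)
    (g : E → ℝ) (hg : ConvexOn ℝ K g)
    (a D : ℝ) (hD : 0 ≤ D)
    (hbd : ∀ x ∈ K, a ≤ g x ∧ g x ≤ a + D)
    (N : ℕ) (hN : 1 ≤ N)
    (x : Fin N → E) (hx : ∀ i, x i ∈ K)
    (p : Fin N → ℝ) (hp : ∀ i, 0 ≤ p i) (hps : ∑ i, p i = 1)
    (γ : ℝ) (hγ : 0 < γ) :
    Real.log (∑ i, p i * Real.exp (-γ * g (x i))) ≤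
      -γ * g (∑ i, p i • x i) + γ ^ 2 * D ^ 2 / 8 := by
  simpa only [add_sub_cancel_left] using log_exp_weighted_average_bound_general hg
    (fun i _ ↦ hx i) (fun i _ ↦ hbd _ (hx i)) (fun i _ ↦ hp i) hps hγ.le
end

section
/- Let E be a real inner product space, K ⊆ E a convex set, T ≥ 1, N ≥ 1, γ > 0, and let f_1, …, f_T : E → ℝ each be convex on K with values contained in an interval of length D ≥ 0 on K (i.e. for each t there is a_t with a_t ≤ f_t(x) ≤ a_t + D for all x ∈ K). Let x_t^i ∈ K for 1 ≤ t ≤ T, 1 ≤ i ≤ N be the experts' points. Define weights by p_{i,0} = 1/N and p_{i,t} = p_{i,t−1} exp(−γ f_t(x_t^i)) / Σ_{j=1}^{N} p_{j,t−1} exp(−γ f_t(x_t^j)), and played points x_t = Σ_{i=1}^{N} p_{i,t−1} x_t^i. Then Σ_{t=1}^{T} f_t(x_t) − min_{1 ≤ i ≤ N} Σ_{t=1}^{T} f_t(x_t^i) ≤ T γ D² / 8 + (1/γ) ln N. -/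
open Finset

/-!
Dividing by the partition function `Z t = ∑ i, p (t - 1) i * exp (-γ * ℓ t i)` at every round
telescopes to `p T i * ∏ t, Z t = p 0 i * exp (-γ * ∑ t, ℓ t i)`. Since `p T i ≤ 1`, the sum of the
`log (Z t)` is at least `log (p 0 i) - γ * ∑ t, ℓ t i` for every expert `i`, while Hoeffding's lemma
bounds `log (Z t)` above by `-γ` times the mean loss `∑ i, p (t - 1) i * ℓ t i` plus `γ² D² / 8`.
Comparing the two controls the mean losses, and by Jensen's inequality these dominate the losses of
the played points.
-/

section Hoeffding

open MeasureTheory ProbabilityTheory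

lemma mgf_le_exp_of_mem_Icc {Ω : Type*} [MeasurableSpace Ω] {μ : Measure Ω}
    [IsProbabilityMeasure μ] {X : Ω → ℝ} {a b : ℝ} (hX : AEMeasurable X μ)
    (hab : ∀ᵐ ω ∂μ, X ω ∈ Set.Icc a b) (s : ℝ) :
    mgf X μ s ≤ Real.exp (s * μ[X] + s ^ 2 * (b - a) ^ 2 / 8) := by
  have hcentred : mgf (fun ω => X ω - μ[X]) μ s ≤ Real.exp (s ^ 2 * (b - a) ^ 2 / 8) := by
    refine ((hasSubgaussianMGF_of_mem_Icc hX hab).mgf_le s).trans_eq (congrArg Real.exp ?_)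
    simp only [NNReal.coe_pow, NNReal.coe_div, coe_nnnorm, Real.norm_eq_abs, NNReal.coe_ofNat,
      div_pow, sq_abs]
    ring
  calc mgf X μ s = mgf (fun ω => μ[X] + (X ω - μ[X])) μ s := by simp only [add_sub_cancel]
    _ = Real.exp (s * μ[X]) * mgf (fun ω => X ω - μ[X]) μ s := mgf_const_add _
    _ ≤ Real.exp (s * μ[X]) * Real.exp (s ^ 2 * (b - a) ^ 2 / 8) := by gcongr
    _ = Real.exp (s * μ[X] + s ^ 2 * (b - a) ^ 2 / 8) := (Real.exp_add _ _).symm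

lemma sum_mul_exp_le_of_mem_Icc {ι : Type*} [Fintype ι] {w v : ι → ℝ} {a b : ℝ}
    (hw : w ∈ stdSimplex ℝ ι) (hv : ∀ i, v i ∈ Set.Icc a b) (s : ℝ) :
    ∑ i, w i * Real.exp (s * v i) ≤
      Real.exp (s * ∑ i, w i * v i + s ^ 2 * (b - a) ^ 2 / 8) := by
  let _ : MeasurableSpace ι := ⊤
  let P : PMF ι := PMF.ofFintype (fun i => ENNReal.ofReal (w i)) <| by
    rw [← ENNReal.ofReal_sum_of_nonneg fun i _ => hw.1 i, hw.2, ENNReal.ofReal_one]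
  have integral_eq (g : ι → ℝ) : ∫ i, g i ∂P.toMeasure = ∑ i, w i * g i := by
    simp [PMF.integral_eq_sum, P, hw.1]
  simpa only [mgf, integral_eq] using
    mgf_le_exp_of_mem_Icc (μ := P.toMeasure) (measurable_of_finite v).aemeasurable
      (.of_forall hv) s

end Hoeffding

lemma uniform_mem_stdSimplex {ι : Type*} [Fintype ι] [Nonempty ι] :
    (fun _ => 1 / (Fintype.card ι : ℝ)) ∈ stdSimplex ℝ ι :=
  ⟨fun _ => by positivity, by simp⟩

section GibbsUpdate

variable {ι : Type*} [Fintype ι] {γ : ℝ}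

/-- The partition function of the losses `ℓ` under the weights `w` at inverse temperature `γ`.
When `w` is a probability vector and `γ > 0`, `-log (gibbsPartition γ w ℓ) / γ` is
the mix loss. -/
noncomputable def gibbsPartition (γ : ℝ) (w ℓ : ι → ℝ) : ℝ :=
  ∑ i, w i * Real.exp (-γ * ℓ i)

/-- The Gibbs posterior of the prior `w` after the losses `ℓ` at learning rate `γ`, which is the
weight update of the forecaster. -/
noncomputable def gibbsUpdate (γ : ℝ) (w ℓ : ι → ℝ) (i : ι) : ℝ :=
  w i * Real.exp (-γ * ℓ i) / gibbsPartition γ w ℓ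

lemma gibbsPartition_pos {w : ι → ℝ} (hw : w ∈ stdSimplex ℝ ι) (γ : ℝ) (ℓ : ι → ℝ) :
    0 < gibbsPartition γ w ℓ := by
  obtain ⟨i, hi⟩ : ∃ i, 0 < w i := by
    by_contra! hle
    linarith [hw.2, sum_nonpos fun i (_ : i ∈ univ) => hle i]
  exact sum_pos' (fun j _ => mul_nonneg (hw.1 j) (Real.exp_pos _).le)
    ⟨i, mem_univ i, mul_pos hi (Real.exp_pos _)⟩

lemma gibbsUpdate_mem_stdSimplex {w : ι → ℝ} (hw : w ∈ stdSimplex ℝ ι) (γ : ℝ) (ℓ : ι → ℝ) :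
    gibbsUpdate γ w ℓ ∈ stdSimplex ℝ ι := by
  have hZ := gibbsPartition_pos hw γ ℓ
  refine ⟨fun i => div_nonneg (mul_nonneg (hw.1 i) (Real.exp_pos _).le) hZ.le, ?_⟩
  simp only [gibbsUpdate, ← sum_div]
  exact div_self hZ.ne'

lemma log_gibbsPartition_le {w ℓ : ι → ℝ} {a D : ℝ} (hw : w ∈ stdSimplex ℝ ι)
    (hℓ : ∀ i, ℓ i ∈ Set.Icc a (a + D)) (γ : ℝ) :
    Real.log (gibbsPartition γ w ℓ) ≤ -γ * ∑ i, w i * ℓ i + γ ^ 2 * D ^ 2 / 8 := by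
  rw [Real.log_le_iff_le_exp (gibbsPartition_pos hw γ ℓ)]
  simpa only [gibbsPartition, neg_sq, add_sub_cancel_left] using
    sum_mul_exp_le_of_mem_Icc hw hℓ (-γ)

variable {T : ℕ} {p ℓ : ℕ → ι → ℝ}

lemma mem_stdSimplex_of_gibbsUpdate (hp₀ : p 0 ∈ stdSimplex ℝ ι)
    (hp : ∀ t ∈ Icc 1 T, p t = gibbsUpdate γ (p (t - 1)) (ℓ t)) {t : ℕ} (ht : t ≤ T) :
    p t ∈ stdSimplex ℝ ι := by
  induction t with
  | zero => exact hp₀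
  | succ t ih =>
    rw [hp (t + 1) (mem_Icc.2 ⟨t.succ_pos, ht⟩)]
    exact gibbsUpdate_mem_stdSimplex (ih (by lia)) γ _

lemma weight_mul_prod_gibbsPartition (hp₀ : p 0 ∈ stdSimplex ℝ ι)
    (hp : ∀ t ∈ Icc 1 T, p t = gibbsUpdate γ (p (t - 1)) (ℓ t)) (i : ι) :
    p T i * ∏ t ∈ Icc 1 T, gibbsPartition γ (p (t - 1)) (ℓ t) =
      p 0 i * Real.exp (-γ * ∑ t ∈ Icc 1 T, ℓ t i) := by
  induction T with
  | zero => simp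
  | succ T ih =>
    have hp' : ∀ t ∈ Icc 1 T, p t = gibbsUpdate γ (p (t - 1)) (ℓ t) :=
      fun t ht => hp t (Icc_subset_Icc_right T.le_succ ht)
    have hZ : gibbsPartition γ (p T) (ℓ (T + 1)) ≠ 0 :=
      (gibbsPartition_pos (mem_stdSimplex_of_gibbsUpdate hp₀ hp' le_rfl) γ _).ne'
    have hstep : p (T + 1) i * gibbsPartition γ (p T) (ℓ (T + 1)) =
        p T i * Real.exp (-γ * ℓ (T + 1) i) := by
      rw [hp (T + 1) (right_mem_Icc.2 T.succ_pos), Nat.add_sub_cancel]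
      exact div_mul_cancel₀ _ hZ
    rw [prod_Icc_succ_top T.succ_pos, sum_Icc_succ_top T.succ_pos, Nat.add_sub_cancel, mul_add,
      Real.exp_add]
    linear_combination (∏ t ∈ Icc 1 T, gibbsPartition γ (p (t - 1)) (ℓ t)) * hstep +
      Real.exp (-γ * ℓ (T + 1) i) * ih hp'

lemma log_weight_sub_le_sum_log_gibbsPartition (hp₀ : p 0 ∈ stdSimplex ℝ ι)
    (hp : ∀ t ∈ Icc 1 T, p t = gibbsUpdate γ (p (t - 1)) (ℓ t)) {i : ι} (hi : 0 < p 0 i) :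
    Real.log (p 0 i) - γ * ∑ t ∈ Icc 1 T, ℓ t i ≤
      ∑ t ∈ Icc 1 T, Real.log (gibbsPartition γ (p (t - 1)) (ℓ t)) := by
  have hZ : ∀ t ∈ Icc 1 T, 0 < gibbsPartition γ (p (t - 1)) (ℓ t) := fun t ht =>
    gibbsPartition_pos (mem_stdSimplex_of_gibbsUpdate hp₀ hp (by grind)) γ _
  have hpT : p T i ≤ 1 :=
    (mem_Icc_of_mem_stdSimplex (mem_stdSimplex_of_gibbsUpdate hp₀ hp le_rfl) i).2
  calc Real.log (p 0 i) - γ * ∑ t ∈ Icc 1 T, ℓ t i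
      = Real.log (p 0 i * Real.exp (-γ * ∑ t ∈ Icc 1 T, ℓ t i)) := by
        rw [Real.log_mul hi.ne' (Real.exp_pos _).ne', Real.log_exp]
        ring
    _ ≤ Real.log (∏ t ∈ Icc 1 T, gibbsPartition γ (p (t - 1)) (ℓ t)) := by
        refine Real.log_le_log (mul_pos hi (Real.exp_pos _)) ?_
        rw [← weight_mul_prod_gibbsPartition hp₀ hp i]
        exact mul_le_of_le_one_left (prod_pos hZ).le hpT
    _ = ∑ t ∈ Icc 1 T, Real.log (gibbsPartition γ (p (t - 1)) (ℓ t)) :=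
        Real.log_prod fun t ht => (hZ t ht).ne'

theorem mul_sum_mean_loss_le (hp₀ : p 0 ∈ stdSimplex ℝ ι)
    (hp : ∀ t ∈ Icc 1 T, p t = gibbsUpdate γ (p (t - 1)) (ℓ t)) {D : ℕ → ℝ}
    (hℓ : ∀ t ∈ Icc 1 T, ∃ a, ∀ i, ℓ t i ∈ Set.Icc a (a + D t)) {i : ι} (hi : 0 < p 0 i) :
    γ * ∑ t ∈ Icc 1 T, ∑ j, p (t - 1) j * ℓ t j ≤
      γ * ∑ t ∈ Icc 1 T, ℓ t i + ∑ t ∈ Icc 1 T, γ ^ 2 * D t ^ 2 / 8 - Real.log (p 0 i) := by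
  have hmix : ∑ t ∈ Icc 1 T, Real.log (gibbsPartition γ (p (t - 1)) (ℓ t)) ≤
      ∑ t ∈ Icc 1 T, (-γ * ∑ j, p (t - 1) j * ℓ t j + γ ^ 2 * D t ^ 2 / 8) := by
    refine sum_le_sum fun t ht => ?_
    obtain ⟨a, ha⟩ := hℓ t ht
    have hw := mem_stdSimplex_of_gibbsUpdate hp₀ hp (t := t - 1) (by grind)
    exact log_gibbsPartition_le hw ha γ
  rw [sum_add_distrib, ← mul_sum] at hmix
  linarith [log_weight_sub_le_sum_log_gibbsPartition hp₀ hp hi]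

end GibbsUpdate

theorem exp_weighted_forecaster_regret_general
    {E ι : Type*} [AddCommGroup E] [Module ℝ E] [Fintype ι] {K : Set E} {T : ℕ} {γ : ℝ}
    (hγ : 0 < γ) {D : ℕ → ℝ} {f : ℕ → E → ℝ} (hconv : ∀ t ∈ Icc 1 T, ConvexOn ℝ K (f t))
    {xE : ℕ → ι → E} (hxE : ∀ t ∈ Icc 1 T, ∀ i, xE t i ∈ K)
    (hbd : ∀ t ∈ Icc 1 T, ∃ a, ∀ i, f t (xE t i) ∈ Set.Icc a (a + D t))
    {p : ℕ → ι → ℝ} (hp₀ : p 0 ∈ stdSimplex ℝ ι)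
    (hp : ∀ t ∈ Icc 1 T, p t = gibbsUpdate γ (p (t - 1)) (fun i => f t (xE t i)))
    {x : ℕ → E} (hx : ∀ t ∈ Icc 1 T, x t = ∑ i, p (t - 1) i • xE t i)
    {i : ι} (hi : 0 < p 0 i) :
    ∑ t ∈ Icc 1 T, f t (x t) - ∑ t ∈ Icc 1 T, f t (xE t i) ≤
      ∑ t ∈ Icc 1 T, γ * D t ^ 2 / 8 + 1 / γ * Real.log (1 / p 0 i) := by
  have hJensen : ∑ t ∈ Icc 1 T, f t (x t) ≤
      ∑ t ∈ Icc 1 T, ∑ j, p (t - 1) j * f t (xE t j) := by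
    refine sum_le_sum fun t ht => ?_
    have hw := mem_stdSimplex_of_gibbsUpdate hp₀ hp (t := t - 1) (by grind)
    rw [hx t ht]
    exact (hconv t ht).map_sum_le (fun j _ => hw.1 j) hw.2 (fun j _ => hxE t ht j)
  have hmixture := mul_sum_mean_loss_le hp₀ hp hbd hi
  have hscale : ∑ t ∈ Icc 1 T, γ ^ 2 * D t ^ 2 / 8 = γ * ∑ t ∈ Icc 1 T, γ * D t ^ 2 / 8 := by
    rw [mul_sum]
    exact sum_congr rfl fun t _ => by ring
  rw [one_div (p 0 i), Real.log_inv]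
  refine le_of_mul_le_mul_left ?_ hγ
  calc γ * (∑ t ∈ Icc 1 T, f t (x t) - ∑ t ∈ Icc 1 T, f t (xE t i))
      ≤ γ * (∑ t ∈ Icc 1 T, ∑ j, p (t - 1) j * f t (xE t j) - ∑ t ∈ Icc 1 T, f t (xE t i)) := by
        gcongr
    _ ≤ γ * ∑ t ∈ Icc 1 T, γ * D t ^ 2 / 8 - Real.log (p 0 i) := by linarith
    _ = γ * (∑ t ∈ Icc 1 T, γ * D t ^ 2 / 8 + 1 / γ * -Real.log (p 0 i)) := by
        field_simp
        ring

/-- regret bound for the exponentially weighted average forecaster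
applied to convex losses, with general learning rate `γ`. -/
theorem exp_weighted_forecaster_regret
    {E : Type*} [NormedAddCommGroup E] [InnerProductSpace ℝ E]
    (K : Set E) (hKconv : Convex ℝ K)
    (T N : ℕ) (hT : 1 ≤ T) (hN : 1 ≤ N)
    (γ D : ℝ) (hγ : 0 < γ) (hD : 0 ≤ D)
    (f : ℕ → E → ℝ)
    (hconv : ∀ t ∈ Icc 1 T, ConvexOn ℝ K (f t))
    (hbd : ∀ t ∈ Icc 1 T, ∃ a : ℝ, ∀ x ∈ K, a ≤ f t x ∧ f t x ≤ a + D)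
    (xE : ℕ → Fin N → E) (hxE : ∀ t ∈ Icc 1 T, ∀ i, xE t i ∈ K)
    (p : ℕ → Fin N → ℝ)
    (hp0 : ∀ i, p 0 i = 1 / (N : ℝ))
    (hprec : ∀ t ∈ Icc 1 T, ∀ i, p t i =
      p (t - 1) i * Real.exp (-γ * f t (xE t i)) /
        ∑ j, p (t - 1) j * Real.exp (-γ * f t (xE t j)))
    (x : ℕ → E) (hx : ∀ t ∈ Icc 1 T, x t = ∑ i, p (t - 1) i • xE t i) :
    ∑ t ∈ Icc 1 T, f t (x t)
      - Finset.univ.inf' (Finset.univ_nonempty_iff.mpr ⟨⟨0, hN⟩⟩)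
          (fun i => ∑ t ∈ Icc 1 T, f t (xE t i))
      ≤ T * γ * D ^ 2 / 8 + (1 / γ) * Real.log N := by
  have : Nonempty (Fin N) := ⟨⟨0, hN⟩⟩
  have hp₀ : p 0 ∈ stdSimplex ℝ (Fin N) := by
    simpa only [funext hp0, Fintype.card_fin] using uniform_mem_stdSimplex (ι := Fin N)
  have hbdE : ∀ t ∈ Icc 1 T, ∃ a, ∀ i, f t (xE t i) ∈ Set.Icc a (a + D) := fun t ht =>
    (hbd t ht).imp fun _ ha i => ha _ (hxE t ht i)
  refine sub_le_comm.1 (le_inf' _ _ fun i _ => sub_le_comm.1 ?_)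
  simpa [hp0, mul_assoc, mul_div_assoc] using exp_weighted_forecaster_regret_general hγ hconv hxE
    hbdE hp₀ (fun t ht => funext (hprec t ht)) hx (i := i) (by rw [hp0]; positivity)
end
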